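/- For all graded posets P and Q of rank at least 1, the type B quasisymmetric function is multiplicative with respect to the diamond product: F_B(P ◇ Q) = F_B(P) · F_B(Q). -/

import Mathlib

open scoped TensorProduct

noncomputable section

namespace Tcheb

/-! ### The algebra `R⟨a,b⟩` of ab-polynomials -/

/-- Words in the two noncommuting letters `a` (encoded `true`) and `b` (encoded `false`). -/
abbrev ABWord : Type := FreeMonoid Bool

/-- The ring `R⟨a,b⟩` of polynomials in two noncommuting variables `a` and `b`. -/
abbrev AB (R : Type) [CommRing R] : Type := MonoidAlgebra R ABWord

variable (R : Type) [CommRing R]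

/-- The ab-monomial corresponding to a word. -/
def word (l : List Bool) : AB R := MonoidAlgebra.of R ABWord (FreeMonoid.ofList l)

/-- The variable `a`. -/
def av : AB R := word R [true]
/-- The variable `b`. -/
def bv : AB R := word R [false]
/-- `c = a + b`. -/
def cv : AB R := av R + bv R
/-- `d = ab + ba`. -/
def dv : AB R := av R * bv R + bv R * av R
/-- `a - b`. -/
def ev : AB R := av R - bv R

/-- The linear map defined by prescribing values on the basis of ab-monomials. -/
def onBasis {M : Type} [AddCommMonoid M] [Module R M] (f : List Bool → M) :
    AB R →ₗ[R] M :=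
  (Finsupp.lift M R ABWord fun w => f (FreeMonoid.toList w)) ∘ₗ
    (MonoidAlgebra.coeffLinearEquiv R : AB R ≃ₗ[R] (ABWord →₀ R)).toLinearMap

/-- The algebra map `A` with `A(a) = 1`, `A(b) = 0`. -/
def Amap : AB R →ₐ[R] R :=
  MonoidAlgebra.lift R R ABWord (FreeMonoid.lift fun x => if x then (1 : R) else 0)

/-- The coproduct on `R⟨a,b⟩`: on an ab-monomial `u₁ ⋯ u_k` it is
`Σ_{i=1}^k u₁ ⋯ u_{i-1} ⊗ u_{i+1} ⋯ u_k`. -/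
def Delta : AB R →ₗ[R] AB R ⊗[R] AB R :=
  onBasis R fun w => ∑ i ∈ Finset.range w.length,
    word R (w.take i) ⊗ₜ[R] word R (w.drop (i + 1))

/-- The linear map `C(u) = 2·A(u) + Σ_u A(u₍₁₎)·A(u₍₂₎)`. -/
def Cmap : AB R →ₗ[R] R :=
  2 • (Amap R).toLinearMap +
    (LinearMap.mul' R R ∘ₗ
      TensorProduct.map (Amap R).toLinearMap (Amap R).toLinearMap) ∘ₗ Delta R

/-- `κ(u) = A(u)·(a-b)^(deg u)` on homogeneous `u`, extended linearly. -/
def kappa : AB R →ₗ[R] AB R :=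
  onBasis R fun w => Amap R (word R w) • ev R ^ w.length

/-- `ν(u) = C(u)·(a-b)^(deg u)` on homogeneous `u`, extended linearly. -/
def nuMap : AB R →ₗ[R] AB R :=
  onBasis R fun w => Cmap R (word R w) • ev R ^ w.length

end Tcheb

namespace Tcheb

/-- Cutting a word into the list of segments between the (sorted) cut positions. -/
def segments : List Bool → List ℕ → List (List Bool)
  | l, [] => [l]
  | l, i :: rest => l.take i :: segments (l.drop (i + 1)) (rest.map fun j => j - (i + 1))
  termination_by _ cuts => cuts.length
  decreasing_by simp

variable (R : Type) [CommRing R]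

/-- For segments `[s₁, …, s_k]` this is `ν(s₁)·b·ν(s₂)·b ⋯ b·ν(s_{k-1})·b·κ(s_k)`. -/
def chainProd : List (List Bool) → AB R
  | [] => 1
  | [s] => kappa R (word R s)
  | s :: rest => nuMap R (word R s) * bv R * chainProd rest

/-- The Tchebyshev transform (of the first kind) on ab-polynomials:
`T(u) = Σ_{k ≥ 1} Σ_u ν(u₍₁₎)·b·ν(u₍₂₎)·b ⋯ b·ν(u₍ₖ₋₁₎)·b·κ(u₍ₖ₎)`,
where the inner sum is over the `k`-fold coproduct.  On the ab-monomial basis this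
is the sum, over all sets of positions of deleted letters, of the corresponding
products over the resulting segments. -/
def Tmap : AB R →ₗ[R] AB R :=
  onBasis R fun w => ∑ S : Finset (Fin w.length),
    chainProd R (segments w ((S.sort (· ≤ ·)).map Fin.val))

/-- The `ω` map on a word: replace each occurrence of `ab` by `2d` and all
remaining letters by `c`. -/
def omegaWord : List Bool → AB R
  | [] => 1
  | true :: false :: rest => (2 * dv R) * omegaWord rest
  | _ :: rest => cv R * omegaWord rest

/-- The `ω` map of Billera–Ehrenborg–Readdy. -/
def omegaMap : AB R →ₗ[R] AB R := onBasis R fun w => omegaWord R w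

/-- The reversal involution `u ↦ u*` of ab-polynomials. -/
def revMap : AB R →ₗ[R] AB R := onBasis R fun w => word R w.reverse

/-- `H*(1) = 0` and `H*(u·a) = H*(u·b) = u`. -/
def Hstar : AB R →ₗ[R] AB R :=
  onBasis R fun w => if w = [] then 0 else word R w.dropLast

/-- The Tchebyshev transform of the second kind `U(u) = H*(T(u·a))`. -/
def Umap : AB R →ₗ[R] AB R := Hstar R ∘ₗ Tmap R ∘ₗ LinearMap.mulRight R (av R)

/-- `σ(u) = Σ_u κ(u₍₁₎)·b·T(u₍₂₎)`. -/
def sigmaMap : AB R →ₗ[R] AB R :=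
  LinearMap.mul' R (AB R) ∘ₗ
    TensorProduct.map (LinearMap.mulRight R (bv R) ∘ₗ kappa R) (Tmap R) ∘ₗ Delta R

/-! ### Graded posets and the ab-index -/

/-- `rk` is a rank function for a bounded poset: `rk ⊥ = 0` and covers raise rank by one. -/
def IsRankFun (α : Type) [PartialOrder α] [OrderBot α] (rk : α → ℕ) : Prop :=
  rk ⊥ = 0 ∧ ∀ x y : α, x ⋖ y → rk y = rk x + 1

/-- `f` lists the elements of a chain in increasing order with respect to the
strict order relation `lt`. -/
def IsStrictChain {α : Type} (lt : α → α → Prop) {n : ℕ} (f : Fin (n + 1) → α) : Prop :=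
  ∀ i j : Fin (n + 1), i < j → lt (f i) (f j)

/-- The weight of a chain `x₀ < x₁ < ⋯ < x_k`:
`(a-b)^{ρ(x₀,x₁)-1}·b·(a-b)^{ρ(x₁,x₂)-1}·b ⋯ b·(a-b)^{ρ(x_{k-1},x_k)-1}`. -/
def chainWt {α : Type} (rk : α → ℕ) {n : ℕ} (f : Fin (n + 1) → α) : AB R :=
  (List.intersperse (bv R)
    (List.ofFn fun i : Fin n => ev R ^ (rk (f i.succ) - rk (f i.castSucc) - 1))).prod

/-- The ab-index `Ψ` of the graded poset with strict order relation `lt`, rank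
function `rk`, minimum `b` and maximum `t`: the sum of the weights of all chains
from `b` to `t`. -/
def PsiRel {α : Type} (lt : α → α → Prop) (rk : α → ℕ) (b t : α) : AB R :=
  ∑ᶠ (n : ℕ), ∑ᶠ (f : Fin (n + 1) → α)
    (_ : IsStrictChain lt f ∧ f 0 = b ∧ f (Fin.last n) = t), chainWt R rk f

end Tcheb

namespace Tcheb

/-! ### The Tchebyshev transform of a graded poset -/

section TPoset

variable (α : Type) [PartialOrder α] [BoundedOrder α]

/-- The elements `[x,y]` of the Tchebyshev transform: intervals of `P ∪ {-1̂}`,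
i.e. pairs `(x,y)` with `x ∈ P ∪ {-1̂}`, `y ∈ P` and `x < y`. -/
def TPel : Type := {p : WithBot α × α // p.1 < (p.2 : WithBot α)}

/-- The underlying set of the Tchebyshev transform `T(P)`: the intervals `[x,y]`
together with a new maximum element (`none`). -/
def TP : Type := Option (TPel α)

/-- The cover relation of the Tchebyshev transform `T(P)`:
`[x,y] ⋖ [y,w]` and `[x,y] ⋖ [x,w]` whenever `y ⋖ w` in `P`, and `[x,1̂] ⋖ 1̂_{T(P)}`. -/
inductive TPcov : TP α → TP α → Prop
  | up {x : WithBot α} {y w : α} (h1 : x < (y : WithBot α))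
      (h2 : (y : WithBot α) < (w : WithBot α)) (hc : y ⋖ w) :
      TPcov (some ⟨(x, y), h1⟩) (some ⟨((y : WithBot α), w), h2⟩)
  | same {x : WithBot α} {y w : α} (h1 : x < (y : WithBot α))
      (h2 : x < (w : WithBot α)) (hc : y ⋖ w) :
      TPcov (some ⟨(x, y), h1⟩) (some ⟨(x, w), h2⟩)
  | top {x : WithBot α} (h1 : x < ((⊤ : α) : WithBot α)) :
      TPcov (some ⟨(x, (⊤ : α)), h1⟩) none

/-- The strict order relation of `T(P)`, generated by the cover relation. -/
def TPlt : TP α → TP α → Prop := Relation.TransGen (TPcov α)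

/-- The order relation of `T(P)`, generated by the cover relation. -/
def TPle : TP α → TP α → Prop := Relation.ReflTransGen (TPcov α)

/-- The minimum element `[-1̂, 0̂]` of `T(P)`. -/
def TPbot : TP α := some ⟨((⊥ : WithBot α), (⊥ : α)), WithBot.bot_lt_coe _⟩

/-- The maximum element `1̂_{T(P)}` of `T(P)`. -/
def TPtop : TP α := none

/-- The rank function of `T(P)`: `ρ([x,y]) = ρ(y)` and `ρ(1̂_{T(P)}) = ρ(P) + 1`. -/
def TPrk (rk : α → ℕ) : TP α → ℕ
  | some p => rk p.1.2
  | none => rk (⊤ : α) + 1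

theorem TPbot_ne_TPtop : TPbot α ≠ TPtop α := by exact Option.some_ne_none _

/-- The map `z : T(P) → P ∪ {2̂}` with `z([x,y]) = y` and `z(1̂_{T(P)}) = 2̂`. -/
def zmap : TP α → WithTop α
  | some p => (p.1.2 : WithTop α)
  | none => ⊤

/-- The number of elements of the interval `[u,v]` of `P`, for `u, v ∈ P ∪ {2̂}`. -/
def intervalCard (u v : WithTop α) : ℕ :=
  Set.ncard {t : α | u ≤ (t : WithTop α) ∧ (t : WithTop α) ≤ v}

end TPoset

/-! ### The dual diamond product -/

/-- The strict order relation of the dual diamond product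
`P ◇* Q = ((P ∖ {1̂}) × (Q ∖ {1̂})) ∪ {1̂}` (with `none` the new maximum), built from
the order relations `leA, ltA` and `leB, ltB` of the two factors. -/
def dsLT {A B : Type} (leA ltA : A → A → Prop) (leB ltB : B → B → Prop) :
    Option (A × B) → Option (A × B) → Prop
  | some p, some q => (leA p.1 q.1 ∧ leB p.2 q.2) ∧ (ltA p.1 q.1 ∨ ltB p.2 q.2)
  | some _, none => True
  | none, _ => False

/-! ### EL-labelings -/

/-- The list of edge labels along a chain (given as a list of poset elements). -/
def labelsList {α Λ : Type} (lam : α → α → Λ) (l : List α) : List Λ :=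
  (l.zip l.tail).map fun p => lam p.1 p.2

/-- `l` is a maximal (saturated) chain of the interval `[x,y]` with respect to the
cover relation `cov`: it runs from `x` to `y` and every step is a cover. -/
def IsMaxChainList {α : Type} (cov : α → α → Prop) (x y : α) (l : List α) : Prop :=
  l.head? = some x ∧ l.getLast? = some y ∧ l.Chain' cov

/-- An `EL`-labeling of the poset whose cover relation is `cov`, with labels in the
linearly ordered set `(Λ, lle, llt)`: every interval has a unique rising maximal
chain, which moreover is lexicographically least among all maximal chains of the
interval. -/
def IsELLabeling (α Λ : Type) (lle llt : Λ → Λ → Prop)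
    (cov : α → α → Prop) (lam : α → α → Λ) : Prop :=
  ∀ x y : α, Relation.ReflTransGen cov x y →
    ∃ l : List α, (IsMaxChainList cov x y l ∧ (labelsList lam l).Chain' lle) ∧
      (∀ l' : List α, IsMaxChainList cov x y l' →
        (labelsList lam l').Chain' lle → l' = l) ∧
      (∀ l' : List α, IsMaxChainList cov x y l' →
        labelsList lam l = labelsList lam l' ∨
          List.Lex llt (labelsList lam l) (labelsList lam l'))

/-! ### Eulerian posets -/

/-- A graded poset is Eulerian if every nontrivial interval `[x,y]` has the
same number of elements of even rank as of odd rank. -/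
def IsEulerian (α : Type) [PartialOrder α] (rk : α → ℕ) : Prop :=
  ∀ x y : α, x < y →
    Set.ncard {z : α | x ≤ z ∧ z ≤ y ∧ Even (rk z)} =
      Set.ncard {z : α | x ≤ z ∧ z ≤ y ∧ ¬ Even (rk z)}

/-! ### The face lattice of the crosspolytope -/

/-- A face of the `n`-dimensional crosspolytope: a partial sign vector, i.e. the
pair `(S, ε)` of a subset `S ⊆ {1,…,n}` (the set of coordinates where the function
takes a value `some`) together with a sign function `ε` on `S`. -/
def CrossEl (n : ℕ) : Type := Fin n → Option Bool

/-- `(S,ε) ≤ (T,δ)` iff `S ⊆ T` and `δ` restricted to `S` is `ε`. -/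
instance (n : ℕ) : PartialOrder (CrossEl n) where
  le f g := ∀ i s, f i = some s → g i = some s
  le_refl f i s h := h
  le_trans f g h fg gh i s hi := gh i s (fg i s hi)
  le_antisymm f g fg gf := by
    funext i
    cases hf : f i with
    | some s => exact (fg i s hf).symm
    | none =>
      cases hg : g i with
      | some s => exact absurd (gf i s hg) (by simp [hf])
      | none => rfl

/-- The face lattice of the `n`-dimensional crosspolytope: all partial sign
vectors together with a new maximum element. -/
abbrev Cross (n : ℕ) : Type := WithTop (CrossEl n)

/-- The rank function of the face lattice of the crosspolytope:
`ρ(S,ε) = |S|` and the maximum has rank `n + 1`. -/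
def crossRk (n : ℕ) : Cross n → ℕ
  | none => n + 1
  | some f => (Finset.univ.filter fun i : Fin n => (f i).isSome).card

/-- The minimal element (the empty face) of the crosspolytope face lattice. -/
def crossBot (n : ℕ) : Cross n := WithTop.some (fun _ => none)

/-- The maximal element of the crosspolytope face lattice. -/
def crossTop (n : ℕ) : Cross n := ⊤

/-! ### Quasisymmetric functions -/

/-- The monomial quasisymmetric function `M_{(p₁,…,p_k)}`, as a formal power
series in the countably many commuting variables `t₁, t₂, …` (indexed by `ℕ`). -/
def MQ (R : Type) [CommRing R] (ps : List ℕ) : MvPowerSeries ℕ R :=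
  fun m => if ((m.support.sort (· ≤ ·)).map fun i => m i) = ps then 1 else 0

/-- The `t`-part of a monomial in the variables `s` (index `none`) and
`t₁, t₂, …` (indices `some i`). -/
def tpart (m : Option ℕ →₀ ℕ) : ℕ →₀ ℕ :=
  Finsupp.comapDomain some m (Option.some_injective ℕ).injOn

/-- The type B monomial quasisymmetric function `s^p · M_{(p₁,…,p_k)}`, a formal
power series in the variables `s` (index `none`) and `t₁, t₂, …` (indices `some i`). -/
def MB (R : Type) [CommRing R] (p : ℕ) (ps : List ℕ) : MvPowerSeries (Option ℕ) R :=
  fun m => if m none = p ∧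
      (((tpart m).support.sort (· ≤ ·)).map fun i => tpart m i) = ps then 1 else 0

/-- The quasisymmetric function `F(P)` of the graded poset with strict order
relation `lt`, rank function `rk`, minimum `b` and maximum `t`:
`F(P) = Σ_c M_{(ρ(x₀,x₁),…,ρ(x_{k-1},x_k))}` over all chains `c` from `b` to `t`. -/
def FQ (R : Type) [CommRing R] {α : Type} (lt : α → α → Prop) (rk : α → ℕ)
    (b t : α) : MvPowerSeries ℕ R :=
  ∑ᶠ (n : ℕ), ∑ᶠ (f : Fin (n + 1) → α)
    (_ : IsStrictChain lt f ∧ f 0 = b ∧ f (Fin.last n) = t),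
    MQ R (List.ofFn fun i : Fin n => rk (f i.succ) - rk (f i.castSucc))

/-- The type B quasisymmetric function `F_B(P) = Σ_{0̂ < x ≤ 1̂} s^{ρ(x)-1}·F([x,1̂])`,
written as a sum over all chains `0̂ < x₀ < x₁ < ⋯ < x_k = 1̂` of
`s^{ρ(x₀)-1}·M_{(ρ(x₀,x₁),…,ρ(x_{k-1},x_k))}`. -/
def FB (R : Type) [CommRing R] {α : Type} (lt : α → α → Prop) (rk : α → ℕ)
    (b t : α) : MvPowerSeries (Option ℕ) R :=
  ∑ᶠ (n : ℕ), ∑ᶠ (f : Fin (n + 1) → α)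
    (_ : IsStrictChain lt f ∧ lt b (f 0) ∧ f (Fin.last n) = t),
    MB R (rk (f 0) - 1) (List.ofFn fun i : Fin n => rk (f i.succ) - rk (f i.castSucc))

/-! ### Characters and the chain maps -/

/-- A character on `k⟨a,b⟩`: a linear functional which is multiplicative with
respect to Cartesian products of graded posets (of rank at least 1). -/
def IsCharacter (k : Type) [Field k] (G : AB k →ₗ[k] k) : Prop :=
  ∀ (α β : Type) [Fintype α] [Fintype β] [PartialOrder α] [PartialOrder β]
    [BoundedOrder α] [BoundedOrder β], ∀ (rkα : α → ℕ) (rkβ : β → ℕ),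
    IsRankFun α rkα → IsRankFun β rkβ → 1 ≤ rkα ⊤ → 1 ≤ rkβ ⊤ →
    G (PsiRel k (· < ·) (fun p : α × β => rkα p.1 + rkβ p.2)
        ((⊥ : α), (⊥ : β)) ((⊤ : α), (⊤ : β))) =
      G (PsiRel k (· < ·) rkα ⊥ ⊤) * G (PsiRel k (· < ·) rkβ ⊥ ⊤)

/-- The quasisymmetric function image `g̃F(P)` of the chain map of the second kind:
`Σ_c G(Ψ([x₀,x₁])) ⋯ G(Ψ([x_{k-1},x_k])) · M_{(ρ(x₀,x₁),…,ρ(x_{k-1},x_k))}`,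
summed over all chains `c = {b = x₀ < ⋯ < x_k = t}`. -/
def gtF (k : Type) [Field k] (G : AB k →ₗ[k] k) {α : Type} (lt : α → α → Prop)
    (rk : α → ℕ) (b t : α) : MvPowerSeries ℕ k :=
  ∑ᶠ (n : ℕ), ∑ᶠ (f : Fin (n + 1) → α)
    (_ : IsStrictChain lt f ∧ f 0 = b ∧ f (Fin.last n) = t),
    (∏ i : Fin n, G (PsiRel k lt rk (f i.castSucc) (f i.succ))) •
      MQ k (List.ofFn fun i : Fin n => rk (f i.succ) - rk (f i.castSucc))

/-- The type B quasisymmetric function image `gF_B(P) = Σ_{0̂ < x ≤ 1̂}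
s^{ρ(x)-1}·g̃F([x,1̂])` of the chain map of the first kind, written as a sum over
all chains `0̂ < x₀ < ⋯ < x_k = 1̂`. -/
def gFB (k : Type) [Field k] (G : AB k →ₗ[k] k) {α : Type} (lt : α → α → Prop)
    (rk : α → ℕ) (b t : α) : MvPowerSeries (Option ℕ) k :=
  ∑ᶠ (n : ℕ), ∑ᶠ (f : Fin (n + 1) → α)
    (_ : IsStrictChain lt f ∧ lt b (f 0) ∧ f (Fin.last n) = t),
    (∏ i : Fin n, G (PsiRel k lt rk (f i.castSucc) (f i.succ))) •
      MB k (rk (f 0) - 1) (List.ofFn fun i : Fin n => rk (f i.succ) - rk (f i.castSucc))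

/-- The space of homogeneous ab-polynomials of degree `n`. -/
def ABhomog (k : Type) [Field k] (n : ℕ) : Submodule k (AB k) :=
  Submodule.span k {x : AB k | ∃ w : List Bool, w.length = n ∧ x = word k w}

/-! ### Proof -/

section FBproof

open Classical in
/-- Number of chains from `x` to `t` with prescribed list of rank differences. -/
def cnt {γ : Type} [Fintype γ] [PartialOrder γ] (rk : γ → ℕ) (t : γ) : List ℕ → γ → ℤ
  | [], x => if x = t then 1 else 0
  | p :: l, x => ∑ y : γ, if x < y ∧ rk y - rk x = p then cnt rk t l y else 0

open Classical in
/-- Generating function of multichains from `x` to `t`. -/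
def Dser {γ : Type} [Fintype γ] [PartialOrder γ] (rk : γ → ℕ) (t : γ) :
    List (Option ℕ) → γ → MvPowerSeries (Option ℕ) ℤ
  | [], x => if x = t then 1 else 0
  | i :: l, x => ∑ y : γ, if x ≤ y then
      (MvPowerSeries.X i : MvPowerSeries (Option ℕ) ℤ) ^ (rk y - rk x) * Dser rk t l y else 0

open Classical in
/-- Truncated type B generating function. -/
def FBtr {γ : Type} [Fintype γ] [PartialOrder γ] (rk : γ → ℕ) (b t : γ)
    (l : List (Option ℕ)) : MvPowerSeries (Option ℕ) ℤ :=
  ∑ x : γ, if b < x then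
      (MvPowerSeries.X none : MvPowerSeries (Option ℕ) ℤ) ^ (rk x - 1) * Dser rk t l x else 0

theorem coeff_Xpow_mul_aux {σ : Type} [DecidableEq σ] (i : σ) (k : ℕ) (h : MvPowerSeries σ ℤ)
    (hh : ∀ m : σ →₀ ℕ, m i ≠ 0 → MvPowerSeries.coeff m h = 0) (m : σ →₀ ℕ) :
    MvPowerSeries.coeff m ((MvPowerSeries.X i : MvPowerSeries σ ℤ) ^ k * h) =
      if k = m i then MvPowerSeries.coeff (m.erase i) h else 0 := by
  classical
  rw [MvPowerSeries.X_pow_eq, MvPowerSeries.coeff_monomial_mul]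
  by_cases hk : k = m i
  · subst hk
    have h1 : Finsupp.single i (m i) ≤ m := by
      rw [Finsupp.single_le_iff]
    have h2 : m - Finsupp.single i (m i) = m.erase i := by
      ext j
      by_cases hj : j = i
      · subst hj; simp
      · simp [Finsupp.erase_ne hj, Finsupp.single_apply, Ne.symm hj]
    simp [h1, h2]
  · rw [if_neg hk]
    split_ifs with h1
    · rw [Finsupp.single_le_iff] at h1
      rw [hh, mul_zero]
      simp
      omega
    · rfl

open Classical in
theorem coeff_Dser {γ : Type} [Fintype γ] [PartialOrder γ] (rk : γ → ℕ) (t : γ)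
    (hrk : StrictMono rk) (l : List (Option ℕ)) (hl : l.Nodup) :
    ∀ (x : γ) (m : Option ℕ →₀ ℕ), MvPowerSeries.coeff m (Dser rk t l x) =
      if (∀ i, m i ≠ 0 → i ∈ l) then cnt rk t ((l.map m).filter (· ≠ 0)) x else 0 := by
  classical
  induction l with
  | nil =>
    intro x m
    have : (∀ i, m i ≠ 0 → i ∈ ([] : List (Option ℕ))) ↔ m = 0 := by
      simp [Finsupp.ext_iff]
    simp only [this, Dser, List.map_nil, List.filter_nil, cnt]
    split_ifs <;> simp_all [MvPowerSeries.coeff_one]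
  | cons i l ih =>
    intro x m
    rw [List.nodup_cons] at hl
    have ih := ih hl.2
    have hmap : l.map (m.erase i) = l.map m := by
      apply List.map_congr_left
      intro j hj
      have : j ≠ i := fun h => hl.1 (h ▸ hj)
      exact Finsupp.erase_ne this
    have hsup : (∀ j, (m.erase i) j ≠ 0 → j ∈ l) ↔ (∀ j, m j ≠ 0 → j ∈ i :: l) := by
      constructor
      · intro h j hj
        by_cases hji : j = i
        · simp [hji]
        · exact List.mem_cons_of_mem _ (h j (by rwa [Finsupp.erase_ne hji]))
      · intro h j hj
        by_cases hji : j = i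
        · simp [hji] at hj
        · rw [Finsupp.erase_ne hji] at hj
          exact (List.mem_cons.1 (h j hj)).resolve_left hji
    have key : ∀ y, MvPowerSeries.coeff m (if x ≤ y then
        (MvPowerSeries.X i : MvPowerSeries (Option ℕ) ℤ) ^ (rk y - rk x) * Dser rk t l y else 0) =
        if (∀ j, m j ≠ 0 → j ∈ i :: l) then
          (if x ≤ y ∧ rk y - rk x = m i then cnt rk t ((l.map m).filter (· ≠ 0)) y else 0)
          else 0 := by
      intro y
      by_cases hxy : x ≤ y
      · rw [if_pos hxy, coeff_Xpow_mul_aux, ih, hmap]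
        · simp only [hsup, hxy, true_and]
          split_ifs <;> rfl
        · intro m' hm'
          rw [ih, if_neg]
          intro h
          exact hl.1 (h i hm')
      · simp [hxy]
    rw [Dser, map_sum, Finset.sum_congr rfl (fun y _ => key y)]
    by_cases hs : (∀ j, m j ≠ 0 → j ∈ i :: l)
    · simp only [if_pos hs]
      by_cases hmi : m i = 0
      · rw [Finset.sum_eq_single x]
        · simp [hmi]
        · intro y _ hy
          rw [if_neg]
          rintro ⟨h1, h2⟩
          have := hrk (lt_of_le_of_ne h1 (Ne.symm hy))
          omega
        · simp
      · rw [List.map_cons, List.filter_cons_of_pos (by simpa using hmi), cnt]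
        apply Finset.sum_congr rfl
        intro y _
        have : (x ≤ y ∧ rk y - rk x = m i) ↔ (x < y ∧ rk y - rk x = m i) := by
          constructor
          · rintro ⟨h1, h2⟩
            refine ⟨lt_of_le_of_ne h1 ?_, h2⟩
            rintro rfl
            omega
          · rintro ⟨h1, h2⟩
            exact ⟨h1.le, h2⟩
        simp only [this]
    · simp only [if_neg hs, Finset.sum_const_zero]

open Classical in
theorem chain_sum {γ : Type} [Fintype γ] [PartialOrder γ] (rk : γ → ℕ) (t : γ) (n : ℕ) :
    ∀ (l : List ℕ) (_ : l.length = n) (x : γ), (∑ f : Fin (n + 1) → γ,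
      if (IsStrictChain (· < ·) f ∧ f (Fin.last n) = t ∧
        (List.ofFn fun i : Fin n => rk (f i.succ) - rk (f i.castSucc)) = l) ∧ f 0 = x
        then (1 : ℤ) else 0) = cnt rk t l x := by
  induction n with
  | zero =>
    intro l hl x
    obtain rfl := List.length_eq_zero_iff.1 hl
    rw [← (Equiv.funUnique (Fin 1) γ).symm.sum_comp]
    simp only [cnt]
    rw [Finset.sum_eq_single x]
    · by_cases hx : x = t
      · rw [if_pos, if_pos hx]
        refine ⟨⟨?_, hx, rfl⟩, rfl⟩
        intro i j hij
        exact absurd hij (by simp [Subsingleton.elim (α := Fin 1) i j])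
      · rw [if_neg, if_neg hx]
        rintro ⟨⟨_, h, _⟩, _⟩
        exact hx h
    · intro y _ hy
      rw [if_neg]
      rintro ⟨_, h⟩
      exact hy h
    · simp
  | succ n ih =>
    intro l hl x
    obtain ⟨p, l, rfl⟩ := List.exists_cons_of_length_eq_add_one hl
    replace hl : l.length = n := by simpa using hl
    rw [← (Fin.consEquiv (fun _ : Fin (n + 1 + 1) => γ)).sum_comp, Fintype.sum_prod_type]
    have hcond : ∀ (z : γ) (g : Fin (n + 1) → γ),
        ((IsStrictChain (· < ·) (Fin.cons z g : Fin (n + 1 + 1) → γ) ∧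
          (Fin.cons z g : Fin (n + 1 + 1) → γ) (Fin.last (n + 1)) = t ∧
          (List.ofFn fun i : Fin (n + 1) =>
            rk ((Fin.cons z g : Fin (n + 1 + 1) → γ) i.succ) -
            rk ((Fin.cons z g : Fin (n + 1 + 1) → γ) i.castSucc)) = p :: l) ∧
          (Fin.cons z g : Fin (n + 1 + 1) → γ) 0 = x) ↔
        (z = x ∧ (x < g 0 ∧ rk (g 0) - rk x = p) ∧ (IsStrictChain (· < ·) g ∧
          g (Fin.last n) = t ∧
          (List.ofFn fun i : Fin n => rk (g i.succ) - rk (g i.castSucc)) = l)) := by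
      intro z g
      have h1 : IsStrictChain (· < ·) (Fin.cons z g : Fin (n + 1 + 1) → γ) ↔
          z < g 0 ∧ IsStrictChain (· < ·) g := by
        constructor
        · intro h
          refine ⟨h 0 1 (by simp [Fin.lt_def]), fun i j hij => ?_⟩
          simpa using h i.succ j.succ (by simpa using hij)
        · rintro ⟨h0, h⟩ i j
          refine Fin.cases ?_ (fun i => ?_) i <;> refine Fin.cases ?_ (fun j => ?_) j
          · simp
          · intro _
            simp only [Fin.cons_zero, Fin.cons_succ]
            rcases eq_or_ne j 0 with rfl | hj
            · exact h0
            · exact h0.trans (h 0 j (Fin.pos_iff_ne_zero.2 hj))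
          · simp
          · intro hij
            simpa using h i j (by simpa using hij)
      rw [h1, List.ofFn_succ, ← Fin.succ_last]
      simp only [Fin.cons_succ, Fin.cons_zero, Fin.castSucc_zero, ← Fin.succ_castSucc,
        List.cons.injEq]
      constructor
      · rintro ⟨⟨⟨a, b⟩, c, d, e⟩, rfl⟩
        exact ⟨rfl, ⟨a, d⟩, b, c, e⟩
      · rintro ⟨rfl, ⟨a, d⟩, b, c, e⟩
        exact ⟨⟨⟨a, b⟩, c, d, e⟩, rfl⟩
    have hcond' := fun z g => propext (hcond z g)
    simp only [Fin.consEquiv, Equiv.coe_fn_mk]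
    simp only [hcond']
    rw [Finset.sum_eq_single x (by intro y _ hy; simp [hy]) (by simp)]
    rw [cnt]
    have : ∀ y : γ, (if x < y ∧ rk y - rk x = p then cnt rk t l y else 0) =
        ∑ f : Fin (n + 1) → γ, if f 0 = y then
          (if (x < f 0 ∧ rk (f 0) - rk x = p) ∧ (IsStrictChain (· < ·) f ∧
            f (Fin.last n) = t ∧
          (List.ofFn fun i : Fin n => rk (f i.succ) - rk (f i.castSucc)) = l)
            then (1 : ℤ) else 0) else 0 := by
      intro y
      by_cases hy : x < y ∧ rk y - rk x = p
      · rw [if_pos hy, ← ih l hl]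
        apply Finset.sum_congr rfl
        intro f _
        by_cases hf : f 0 = y
        · simp only [hf, hy, true_and, and_true, if_true]
        · simp only [hf, and_false, if_false]
      · rw [if_neg hy, eq_comm]
        apply Finset.sum_eq_zero
        intro f _
        by_cases hf : f 0 = y
        · simp only [hf, hy, false_and, if_false, if_true]
        · simp only [hf, if_false]
    rw [Finset.sum_congr rfl (fun y _ => this y), Finset.sum_comm]
    apply Finset.sum_congr rfl
    intro f _
    simp

theorem coeff_FB {γ : Type} [Fintype γ] [PartialOrder γ] (rk : γ → ℕ) (b t : γ)
    (hrk : StrictMono rk) (N : ℕ) (m : Option ℕ →₀ ℕ) (hN : ∀ i, m (some i) ≠ 0 → i < N) :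
    MvPowerSeries.coeff m (FB ℤ (· < ·) rk b t) =
      MvPowerSeries.coeff m (FBtr rk b t ((List.range N).map some)) := by
  classical
  set l := ((tpart m).support.sort (· ≤ ·)).map fun i => tpart m i with hl
  have htp : ∀ i, tpart m i = m (some i) := fun i => rfl
  have hl2 : l = ((((List.range N).map some).map (m.erase none)).filter (· ≠ 0)) := by
    have e1 : (tpart m).support.sort (· ≤ ·) = (List.range N).filter (fun i => m (some i) ≠ 0) := by
      apply List.Perm.eq_of_pairwise (le := (· ≤ ·))
      · intro a b _ _ h1 h2
        exact le_antisymm h1 h2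
      · exact Finset.pairwise_sort _ _
      · exact (List.pairwise_le_range).filter _
      · rw [List.perm_ext_iff_of_nodup (Finset.sort_nodup _ _) (List.nodup_range.filter _)]
        intro a
        simp [htp]
        exact hN a
    rw [hl, e1, List.map_map, List.filter_map]
    simp [Function.comp_def, htp]
  have hnd : ((List.range N).map (some : ℕ → Option ℕ)).Nodup :=
    List.nodup_range.map (Option.some_injective ℕ)
  -- right-hand side
  have hR : MvPowerSeries.coeff m (FBtr rk b t ((List.range N).map some)) =
      ∑ x : γ, if b < x ∧ rk x - 1 = m none then cnt rk t l x else 0 := by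
    rw [FBtr, map_sum]
    apply Finset.sum_congr rfl
    intro x _
    by_cases hx : b < x
    · have hsup : ∀ i, (m.erase none) i ≠ 0 → i ∈ (List.range N).map (some : ℕ → Option ℕ) := by
        intro i hi
        cases i with
        | none => simp at hi
        | some i =>
          rw [Finsupp.erase_ne (by simp)] at hi
          simpa using hN i hi
      rw [if_pos hx, coeff_Xpow_mul_aux, coeff_Dser rk t hrk _ hnd, if_pos hsup, ← hl2]
      · simp [hx]
      · intro m' hm'
        rw [coeff_Dser rk t hrk _ hnd, if_neg]
        intro h
        simpa using h none hm'
    · simp [hx]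
  rw [hR]
  set T : ℕ → MvPowerSeries (Option ℕ) ℤ := fun n => ∑ f : Fin (n + 1) → γ,
    if (IsStrictChain (· < ·) f ∧ b < f 0 ∧ f (Fin.last n) = t) then
      MB ℤ (rk (f 0) - 1) (List.ofFn fun i : Fin n => rk (f i.succ) - rk (f i.castSucc))
      else 0 with hT
  have hFB : FB ℤ (· < ·) rk b t = ∑ᶠ n, T n := by
    rw [FB]
    apply finsum_congr
    intro n
    rw [finsum_eq_sum_of_fintype]
    apply Finset.sum_congr rfl
    intro f _
    rw [finsum_eq_if]
  have hT0 : ∀ n, Fintype.card γ ≤ n → T n = 0 := by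
    intro n hn
    apply Finset.sum_eq_zero
    intro f _
    rw [if_neg]
    rintro ⟨h, -⟩
    have hs : StrictMono f := fun i j hij => h i j hij
    have := Fintype.card_le_of_injective f hs.injective
    simp at this
    omega
  have hFB2 : FB ℤ (· < ·) rk b t = ∑ n ∈ Finset.range (Fintype.card γ), T n := by
    rw [hFB]
    apply finsum_eq_sum_of_support_subset
    intro n hn
    by_contra h
    exact hn (hT0 n (by simpa using h))
  have hMB : ∀ p ps, MvPowerSeries.coeff m (MB ℤ p ps) = if m none = p ∧ l = ps then 1 else 0 :=
    fun p ps => rfl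
  have hcT : ∀ n, MvPowerSeries.coeff m (T n) = ∑ f : Fin (n + 1) → γ,
      if (IsStrictChain (· < ·) f ∧ b < f 0 ∧ f (Fin.last n) = t) ∧ m none = rk (f 0) - 1 ∧
        l = List.ofFn fun i : Fin n => rk (f i.succ) - rk (f i.castSucc) then (1 : ℤ) else 0 := by
    intro n
    rw [hT, map_sum]
    apply Finset.sum_congr rfl
    intro f _
    split_ifs with h1 h2 h2
    · rw [hMB, if_pos h2.2]
    · rw [hMB, if_neg (fun h => h2 ⟨h1, h⟩)]
    · exact absurd h2.1 h1
    · simp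
  rw [hFB2, map_sum, Finset.sum_eq_single l.length]
  · rw [hcT]
    have : ∀ x : γ, (if b < x ∧ rk x - 1 = m none then cnt rk t l x else 0) =
        ∑ f : Fin (l.length + 1) → γ, if f 0 = x then
          (if (IsStrictChain (· < ·) f ∧ b < f 0 ∧ f (Fin.last l.length) = t) ∧
            m none = rk (f 0) - 1 ∧
            l = List.ofFn fun i : Fin l.length => rk (f i.succ) - rk (f i.castSucc)
          then (1 : ℤ) else 0) else 0 := by
      intro x
      by_cases hx : b < x ∧ rk x - 1 = m none
      · rw [if_pos hx, ← chain_sum rk t l.length l rfl]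
        apply Finset.sum_congr rfl
        intro f _
        by_cases hf : f 0 = x
        · simp only [hf, hx, true_and, and_true, if_true, and_assoc]
          simp only [eq_comm (a := l)]
        · simp only [hf, and_false, if_false]
      · rw [if_neg hx, eq_comm]
        apply Finset.sum_eq_zero
        intro f _
        by_cases hf : f 0 = x
        · rw [if_pos hf, if_neg]
          rintro ⟨⟨_, h1, _⟩, h2, _⟩
          rw [hf] at h1 h2
          exact hx ⟨h1, h2.symm⟩
        · simp only [hf, if_false]
    rw [Finset.sum_congr rfl (fun y _ => this y), Finset.sum_comm]
    apply Finset.sum_congr rfl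
    intro f _
    simp
  · intro n _ hn
    rw [hcT]
    apply Finset.sum_eq_zero
    intro f _
    rw [if_neg]
    rintro ⟨_, _, h⟩
    apply hn
    have h' := congrArg List.length h
    rw [List.length_ofFn] at h'
    exact h'.symm
  · intro h
    rw [hT0 _ (by simpa using h), map_zero]

theorem rk_strictMono {α : Type} [Fintype α] [PartialOrder α] [OrderBot α] (rk : α → ℕ)
    (h : IsRankFun α rk) : StrictMono rk := by
  classical
  let _ := Fintype.toLocallyFiniteOrder (α := α)
  rw [strictMono_iff_forall_covBy]
  intro x y hxy
  rw [h.2 x y hxy]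
  omega

open Classical in
theorem sum_ne_bot {α M : Type} [Fintype α] [PartialOrder α] [OrderBot α] [AddCommMonoid M]
    (P : α → Prop) (hP : ∀ x, P x → x ≠ ⊥) (g : α → M) :
    (∑ x : {x : α // x ≠ ⊥}, if P x.1 then g x.1 else 0) = ∑ x : α, if P x then g x else 0 := by
  rw [← Finset.sum_subset (Finset.subset_univ (Finset.univ.filter (fun x : α => x ≠ ⊥)))]
  · exact (Finset.sum_subtype (p := fun x : α => x ≠ ⊥) _ (by simp)
      (fun x => if P x then g x else 0)).symm
  · intro x _ hx
    rw [if_neg]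
    intro h
    simp [hP x h] at hx

/-- The diamond product. -/
abbrev Dia (α β : Type) [PartialOrder α] [PartialOrder β] [BoundedOrder α] [BoundedOrder β] : Type :=
  WithBot ({x : α // x ≠ ⊥} × {y : β // y ≠ ⊥})

/-- The rank function of the diamond product. -/
def rkD {α β : Type} [PartialOrder α] [PartialOrder β] [BoundedOrder α] [BoundedOrder β]
    (rkα : α → ℕ) (rkβ : β → ℕ) (d : Dia α β) : ℕ :=
  match d with
  | none => 0
  | some p => rkα p.1.1 + rkβ p.2.1 - 1

theorem rkD_coe {α β : Type} [PartialOrder α] [PartialOrder β] [BoundedOrder α] [BoundedOrder β]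
    (rkα : α → ℕ) (rkβ : β → ℕ) (p : {x : α // x ≠ ⊥} × {y : β // y ≠ ⊥}) :
    rkD rkα rkβ (p : Dia α β) = rkα p.1.1 + rkβ p.2.1 - 1 := rfl

theorem rk_pos {α : Type} [PartialOrder α] [OrderBot α] {rk : α → ℕ} (h : StrictMono rk)
    {x : α} (hx : x ≠ ⊥) : 1 ≤ rk x := by
  have := h (bot_lt_iff_ne_bot.2 hx)
  omega

theorem rkD_strictMono {α β : Type} [PartialOrder α] [PartialOrder β] [BoundedOrder α]
    [BoundedOrder β] (rkα : α → ℕ) (rkβ : β → ℕ) (hα : StrictMono rkα) (hβ : StrictMono rkβ) :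
    StrictMono (rkD rkα rkβ : Dia α β → ℕ) := by
  intro x y hxy
  induction y using WithBot.recBotCoe with
  | bot => exact absurd hxy not_lt_bot
  | coe q =>
    have h1 := rk_pos hα q.1.2
    have h2 := rk_pos hβ q.2.2
    induction x using WithBot.recBotCoe with
    | bot =>
      rw [rkD_coe]
      change 0 < _
      omega
    | coe p =>
      have h3 := rk_pos hα p.1.2
      have h4 := rk_pos hβ p.2.2
      rw [rkD_coe, rkD_coe]
      rw [WithBot.coe_lt_coe, Prod.lt_iff] at hxy
      rcases hxy with ⟨a, b⟩ | ⟨a, b⟩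
      · have a' : rkα p.1.1 < rkα q.1.1 := hα a
        have b' : rkβ p.2.1 ≤ rkβ q.2.1 := hβ.monotone b
        omega
      · have a' : rkα p.1.1 ≤ rkα q.1.1 := hα.monotone a
        have b' : rkβ p.2.1 < rkβ q.2.1 := hβ b
        omega

theorem sum_Dia {X M : Type} [Fintype X] [AddCommMonoid M] [Fintype (WithBot X)]
    (g : WithBot X → M) (h0 : g ⊥ = 0) : ∑ x : WithBot X, g x = ∑ p : X, g (p : WithBot X) := by
  have h := Fintype.sum_option (α := X) (fun x => g x)
  have h' : g none = 0 := h0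
  rw [h', zero_add] at h
  let e : WithBot X ≃ Option X := Equiv.refl _
  have h2 : ∑ x : WithBot X, g x = ∑ x : Option X, g (e.symm x) :=
    Fintype.sum_equiv e _ _ (fun _ => rfl)
  exact h2.trans h

open Classical in
theorem Dser_Dia {α β : Type} [Fintype α] [Fintype β] [PartialOrder α] [PartialOrder β]
    [BoundedOrder α] [BoundedOrder β] (rkα : α → ℕ) (rkβ : β → ℕ)
    (hα : StrictMono rkα) (hβ : StrictMono rkβ)
    (ta : {x : α // x ≠ ⊥}) (tb : {y : β // y ≠ ⊥})
    (l : List (Option ℕ)) :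
    ∀ p : {x : α // x ≠ ⊥} × {y : β // y ≠ ⊥},
      Dser (rkD rkα rkβ) (((ta, tb) : {x : α // x ≠ ⊥} × {y : β // y ≠ ⊥}) : Dia α β) l
        (p : Dia α β) = Dser rkα ta.1 l p.1.1 * Dser rkβ tb.1 l p.2.1 := by
  induction l with
  | nil =>
    rintro ⟨p, q⟩
    simp only [Dser, WithBot.coe_inj, Prod.mk.injEq, Subtype.ext_iff]
    split_ifs <;> simp_all
  | cons i l ih =>
    rintro ⟨p, q⟩
    rw [Dser, Dser, Dser, sum_Dia _ (by simp)]
    rw [← sum_ne_bot (fun y => p.1 ≤ y) (fun y hy h => p.2 (le_bot_iff.1 (h ▸ hy)))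
      (fun y => (MvPowerSeries.X i : MvPowerSeries (Option ℕ) ℤ) ^ (rkα y - rkα p.1) *
        Dser rkα ta.1 l y)]
    rw [← sum_ne_bot (fun y => q.1 ≤ y) (fun y hy h => q.2 (le_bot_iff.1 (h ▸ hy)))
      (fun y => (MvPowerSeries.X i : MvPowerSeries (Option ℕ) ℤ) ^ (rkβ y - rkβ q.1) *
        Dser rkβ tb.1 l y)]
    rw [Finset.sum_mul_sum, Fintype.sum_prod_type]
    apply Finset.sum_congr rfl
    intro p' _
    apply Finset.sum_congr rfl
    intro q' _
    simp only [WithBot.coe_le_coe, Prod.mk_le_mk, ← Subtype.coe_le_coe]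
    by_cases h1 : p.1 ≤ p'.1
    · by_cases h2 : q.1 ≤ q'.1
      · rw [if_pos ⟨h1, h2⟩, if_pos h1, if_pos h2, ih, rkD_coe, rkD_coe]
        have e1 := hα.monotone h1
        have e2 := hβ.monotone h2
        have e3 := rk_pos hα p.2
        have e4 := rk_pos hβ q.2
        have e : rkα p'.1 + rkβ q'.1 - 1 - (rkα p.1 + rkβ q.1 - 1) =
          (rkα p'.1 - rkα p.1) + (rkβ q'.1 - rkβ q.1) := by omega
        simp only [e, pow_add]
        ring
      · simp [h2]
    · simp [h1]

open Classical in
theorem FBtr_Dia {α β : Type} [Fintype α] [Fintype β] [PartialOrder α] [PartialOrder β]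
    [BoundedOrder α] [BoundedOrder β] (rkα : α → ℕ) (rkβ : β → ℕ)
    (hα : StrictMono rkα) (hβ : StrictMono rkβ)
    (ta : {x : α // x ≠ ⊥}) (tb : {y : β // y ≠ ⊥})
    (l : List (Option ℕ)) :
      FBtr (rkD rkα rkβ) (⊥ : Dia α β)
        (((ta, tb) : {x : α // x ≠ ⊥} × {y : β // y ≠ ⊥}) : Dia α β) l =
        FBtr rkα ⊥ ta.1 l * FBtr rkβ ⊥ tb.1 l := by
  rw [FBtr, FBtr, FBtr, sum_Dia _ (by simp)]
  rw [← sum_ne_bot (fun y : α => ⊥ < y) (fun y hy => hy.ne')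
    (fun y => (MvPowerSeries.X none : MvPowerSeries (Option ℕ) ℤ) ^ (rkα y - 1) *
      Dser rkα ta.1 l y)]
  rw [← sum_ne_bot (fun y : β => ⊥ < y) (fun y hy => hy.ne')
    (fun y => (MvPowerSeries.X none : MvPowerSeries (Option ℕ) ℤ) ^ (rkβ y - 1) *
      Dser rkβ tb.1 l y)]
  rw [Finset.sum_mul_sum, Fintype.sum_prod_type]
  apply Finset.sum_congr rfl
  intro p _
  apply Finset.sum_congr rfl
  intro q _
  rw [if_pos (WithBot.bot_lt_coe _), if_pos (bot_lt_iff_ne_bot.2 p.2),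
    if_pos (bot_lt_iff_ne_bot.2 q.2), Dser_Dia rkα rkβ hα hβ, rkD_coe]
  have e3 := rk_pos hα p.2
  have e4 := rk_pos hβ q.2
  have e : rkα p.1 + rkβ q.1 - 1 - 1 = (rkα p.1 - 1) + (rkβ q.1 - 1) := by omega
  simp only [e, pow_add]
  ring

theorem FB_Dia {α β : Type} [Fintype α] [Fintype β] [PartialOrder α] [PartialOrder β]
    [BoundedOrder α] [BoundedOrder β] (rkα : α → ℕ) (rkβ : β → ℕ)
    (hα : StrictMono rkα) (hβ : StrictMono rkβ)
    (ta : {x : α // x ≠ ⊥}) (tb : {y : β // y ≠ ⊥}) :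
      FB ℤ (· < ·) (rkD rkα rkβ) (⊥ : Dia α β)
        (((ta, tb) : {x : α // x ≠ ⊥} × {y : β // y ≠ ⊥}) : Dia α β) =
        FB ℤ (· < ·) rkα ⊥ ta.1 * FB ℤ (· < ·) rkβ ⊥ tb.1 := by
  classical
  ext m
  obtain ⟨N, hN⟩ : ∃ N, ∀ i, m (some i) ≠ 0 → i < N := by
    refine ⟨(tpart m).support.sup id + 1, fun i hi => ?_⟩
    have : i ∈ (tpart m).support := by
      rw [Finsupp.mem_support_iff]
      exact hi
    exact Nat.lt_succ_of_le (Finset.le_sup (f := id) this)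
  rw [coeff_FB _ _ _ (rkD_strictMono rkα rkβ hα hβ) N m hN, FBtr_Dia rkα rkβ hα hβ,
    MvPowerSeries.coeff_mul, MvPowerSeries.coeff_mul]
  apply Finset.sum_congr rfl
  rintro ⟨m1, m2⟩ hm
  rw [Finset.HasAntidiagonal.mem_antidiagonal] at hm
  have h : ∀ i, m1 i + m2 i = m i := fun i => by rw [← hm]; rfl
  rw [coeff_FB rkα _ _ hα N m1 (fun i hi => hN i (by have := h (some i); omega)),
    coeff_FB rkβ _ _ hβ N m2 (fun i hi => hN i (by have := h (some i); omega))]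

end FBproof

theorem FB_diamond_multiplicative
    (α β : Type) [Fintype α] [Fintype β] [PartialOrder α] [PartialOrder β]
    [BoundedOrder α] [BoundedOrder β] (rkα : α → ℕ) (rkβ : β → ℕ)
    (hα : IsRankFun α rkα) (hβ : IsRankFun β rkβ)
    (h1α : 1 ≤ rkα (⊤ : α)) (h1β : 1 ≤ rkβ (⊤ : β)) :
    FB ℤ (· < ·)
        (fun d : WithBot ({x : α // x ≠ ⊥} × {y : β // y ≠ ⊥}) =>
          match d with
          | none => 0
          | some p => rkα p.1.1 + rkβ p.2.1 - 1)
        (⊥ : WithBot ({x : α // x ≠ ⊥} × {y : β // y ≠ ⊥}))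
        ((⟨⟨⊤, by intro hc; rw [hc, hα.1] at h1α; omega⟩,
           ⟨⊤, by intro hc; rw [hc, hβ.1] at h1β; omega⟩⟩ :
          ({x : α // x ≠ ⊥} × {y : β // y ≠ ⊥})) :
            WithBot ({x : α // x ≠ ⊥} × {y : β // y ≠ ⊥})) =
      FB ℤ (· < ·) rkα (⊥ : α) (⊤ : α) * FB ℤ (· < ·) rkβ (⊥ : β) (⊤ : β) := by

  exact FB_Dia rkα rkβ (rk_strictMono rkα hα) (rk_strictMono rkβ hβ) ⟨⊤, _⟩ ⟨⊤, _⟩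

end Tcheb
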